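/- Let G be a planar graph with maximum degree Δ. Then G admits a proper edge colouring with at most Δ + 4 colours, and moreover each edge uv can receive a colour in {1, ..., max(deg(u), deg(v)) + 4}. -/

import Mathlib

open scoped Classical

/-- `G` has a straight-line plane drawing: vertices are mapped injectively to points of the
plane, edges are the straight segments between their endpoints, two distinct edges only meet in
shared endpoints, and no vertex lies on a non-incident edge. By Fáry's theorem this
characterises planar (simple) graphs. -/
def StraightLinePlanar {V : Type*} (G : SimpleGraph V) : Prop :=
  ∃ f : V → ℝ × ℝ, Function.Injective f ∧
    (∀ u v x y : V, G.Adj u v → G.Adj x y → s(u, v) ≠ s(x, y) →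
      segment ℝ (f u) (f v) ∩ segment ℝ (f x) (f y) ⊆
        ({f u, f v} : Set (ℝ × ℝ)) ∩ ({f x, f y} : Set (ℝ × ℝ))) ∧
    (∀ w u v : V, G.Adj u v → w ≠ u → w ≠ v → f w ∉ segment ℝ (f u) (f v))

/-!
A planar graph is 5-degenerate, so its edges can be coloured greedily: peel off an edge `uv` at a
vertex `u` of degree at most five; when it is put back it meets at most `4 + (deg v - 1)` coloured
edges, fewer than the `max (deg u) (deg v) + 4` colours available to it.

The degeneracy comes from a sweep over a straight-line drawing with distinct abscissae, in place
of Euler's formula. Direct every edge to the right. Each edge `vb` is either the lowest one leaving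
`v`, and is charged to `v`, or the upper side of a wedge with apex `v` between two consecutive
edges, and is charged to the leftmost vertex of that wedge. No edge can enter a wedge to the left
of that vertex, so a vertex is charged at most three times: as an apex, as the end of the upper
side, and as any other point of a wedge. The rightmost vertex is not charged as an apex, so there
are fewer than `3n` edges.
-/

/-- A proper edge colouring of `G`. Colours are given to all unordered pairs of vertices, those of
non-edges being irrelevant. -/
def IsProperEdgeColoring {V α : Type*} (G : SimpleGraph V) (f : Sym2 V → α) : Prop :=
  ∀ u v w : V, G.Adj u v → G.Adj u w → v ≠ w → f s(u, v) ≠ f s(u, w)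

/-- `G` is `d`-degenerate: every subgraph with an edge has a vertex of degree at most `d`. As
subgraphs `H` share the vertex type of `G`, that vertex is required not to be isolated in `H`. -/
def IsDegenerate {V : Type*} [Fintype V] (G : SimpleGraph V) (d : ℕ) : Prop :=
  ∀ H ≤ G, H.support.Nonempty → ∃ v ∈ H.support, H.degree v ≤ d

section EdgeColoring

variable {V α : Type*} {G H : SimpleGraph V} {d : ℕ}

lemma IsProperEdgeColoring.update {e : Sym2 V} {f : Sym2 V → α} {c : α}
    (hf : IsProperEdgeColoring (G.deleteEdges {e}) f)
    (hc : ∀ x ∈ e, ∀ y, G.Adj x y → s(x, y) ≠ e → f s(x, y) ≠ c) :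
    IsProperEdgeColoring G (Function.update f e c) := by
  intro x y z hxy hxz hyz
  have hne : s(x, y) ≠ s(x, z) := fun h => hyz (Sym2.congr_right.1 h)
  by_cases hy : s(x, y) = e
  · have hz : s(x, z) ≠ e := fun h => hne (hy.trans h.symm)
    rw [hy, Function.update_self, Function.update_of_ne hz]
    exact (hc x (hy ▸ Sym2.mem_mk_left x y) z hxz hz).symm
  by_cases hz : s(x, z) = e
  · rw [hz, Function.update_self, Function.update_of_ne hy]
    exact hc x (hz ▸ Sym2.mem_mk_left x z) y hxy hy
  · rw [Function.update_of_ne hy, Function.update_of_ne hz]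
    exact hf x y z (SimpleGraph.deleteEdges_adj.2 ⟨hxy, hy⟩)
      (SimpleGraph.deleteEdges_adj.2 ⟨hxz, hz⟩) hyz

variable [Fintype V]

lemma card_incidenceFinset_union_erase_add_two_le {u v : V} (huv : G.Adj u v) :
    ((G.incidenceFinset u ∪ G.incidenceFinset v).erase s(u, v)).card + 2 ≤
      G.degree u + G.degree v := by
  have hu : s(u, v) ∈ G.incidenceFinset u :=
    (G.mem_incidenceFinset u _).2 ⟨huv, Sym2.mem_mk_left u v⟩
  have hv : s(u, v) ∈ G.incidenceFinset v :=
    (G.mem_incidenceFinset v _).2 ⟨huv, Sym2.mem_mk_right u v⟩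
  have hunion := Finset.card_union_add_card_inter (G.incidenceFinset u) (G.incidenceFinset v)
  have hinter : 0 < (G.incidenceFinset u ∩ G.incidenceFinset v).card :=
    Finset.card_pos.2 ⟨_, Finset.mem_inter.2 ⟨hu, hv⟩⟩
  have herase := Finset.card_erase_add_one (Finset.mem_union_left (G.incidenceFinset v) hu)
  simp only [SimpleGraph.card_incidenceFinset_eq_degree] at hunion
  omega

lemma IsProperEdgeColoring.exists_update {u v : V} (huv : G.Adj u v) {f : Sym2 V → α}
    (hf : IsProperEdgeColoring (G.deleteEdges {s(u, v)}) f) {S : Finset α}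
    (hS : G.degree u + G.degree v ≤ S.card + 1) :
    ∃ c ∈ S, IsProperEdgeColoring G (Function.update f s(u, v) c) := by
  let E := (G.incidenceFinset u ∪ G.incidenceFinset v).erase s(u, v)
  have hcard : (E.image f).card < S.card := by
    have hE : E.card + 2 ≤ _ := card_incidenceFinset_union_erase_add_two_le huv
    have himage : (E.image f).card ≤ E.card := Finset.card_image_le
    omega
  obtain ⟨c, hcS, hc⟩ := Finset.exists_mem_notMem_of_card_lt_card hcard
  refine ⟨c, hcS, hf.update fun x hx y hxy hne hfc => hc (Finset.mem_image.2 ⟨s(x, y), ?_, hfc⟩)⟩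
  rcases Sym2.mem_iff.1 hx with rfl | rfl <;> simp [E, hxy, hne]

lemma IsDegenerate.mono (hG : IsDegenerate G d) (h : H ≤ G) : IsDegenerate H d :=
  fun K hK => hG K (hK.trans h)

theorem IsDegenerate.exists_isProperEdgeColoring [Nonempty α] (hG : IsDegenerate G (d + 1))
    (L : Sym2 V → Finset α)
    (hL : ∀ u v, G.Adj u v → max (G.degree u) (G.degree v) + d ≤ (L s(u, v)).card) :
    ∃ f : Sym2 V → α, IsProperEdgeColoring G f ∧ ∀ e ∈ G.edgeSet, f e ∈ L e := by
  induction G using WellFoundedLT.induction with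
  | ind G ih =>
    rcases G.support.eq_empty_or_nonempty with hempty | hne
    · obtain rfl : G = ⊥ := G.support_eq_bot_iff.1 hempty
      exact ⟨fun _ => Classical.arbitrary α, fun u v w h => h.elim, by simp⟩
    obtain ⟨u, ⟨v, huv⟩, hu⟩ := hG G le_rfl hne
    have hL_mono (H : SimpleGraph V) (hH : H ≤ G) (x y : V) (hxy : H.Adj x y) :
        max (H.degree x) (H.degree y) + d ≤ (L s(x, y)).card := by
      refine le_trans ?_ (hL x y (hH hxy))
      gcongr <;> exact SimpleGraph.degree_le_of_le hH
    have hlt : G.deleteEdges {s(u, v)} < G :=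
      (G.deleteEdges_le _).lt_of_not_ge fun h => by
        simpa [SimpleGraph.deleteEdges_adj] using h huv
    obtain ⟨f, hf, hfL⟩ := ih _ hlt (hG.mono hlt.le) (hL_mono _ hlt.le)
    obtain ⟨c, hcL, hc⟩ := hf.exists_update huv (S := L s(u, v)) (by have := hL u v huv; omega)
    refine ⟨_, hc, fun e he => ?_⟩
    by_cases h : e = s(u, v)
    · rwa [h, Function.update_self]
    · rw [Function.update_of_ne h]
      exact hfL e (by simp [he, h])

lemma exists_mem_support_degree_lt {k : ℕ} (h : G.edgeFinset.card < k * G.support.toFinset.card) :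
    ∃ v ∈ G.support, G.degree v < 2 * k := by
  have hsum : ∑ v ∈ G.support.toFinset, G.degree v < ∑ _v ∈ G.support.toFinset, 2 * k := by
    rw [SimpleGraph.sum_degrees_support_eq_twice_card_edges, Finset.sum_const, smul_eq_mul]
    linarith
  obtain ⟨v, hv, hlt⟩ := Finset.exists_lt_of_sum_lt hsum
  exact ⟨v, Set.mem_toFinset.1 hv, hlt⟩

end EdgeColoring

section LineHeight

variable {p q r : ℝ × ℝ} {t : ℝ}

/-- The slope of the line through `p` and `q`, with junk value `0` if that line is vertical. -/
noncomputable def lineSlope (p q : ℝ × ℝ) : ℝ :=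
  (q.2 - p.2) / (q.1 - p.1)

/-- The height at abscissa `t` of the line through `p` and `q`, which describes the segment from
`p` to `q` as a graph over its abscissae. Only meaningful if that line is not vertical. -/
noncomputable def lineHeight (p q : ℝ × ℝ) (t : ℝ) : ℝ :=
  p.2 + lineSlope p q * (t - p.1)

lemma lineHeight_left (p q : ℝ × ℝ) : lineHeight p q p.1 = p.2 := by
  simp [lineHeight]

lemma lineHeight_right (h : p.1 ≠ q.1) : lineHeight p q q.1 = q.2 := by
  rw [lineHeight, lineSlope, div_mul_cancel₀ _ (sub_ne_zero.2 h.symm), add_sub_cancel]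

lemma continuous_lineHeight (p q : ℝ × ℝ) : Continuous (lineHeight p q) := by
  unfold lineHeight
  fun_prop

lemma lineHeight_lt_lineHeight_iff (ht : p.1 < t) :
    lineHeight p q t < lineHeight p r t ↔ lineSlope p q < lineSlope p r := by
  rw [lineHeight, lineHeight, add_lt_add_iff_left, mul_lt_mul_iff_left₀ (sub_pos.2 ht)]

lemma mk_lineHeight_mem_segment (h : p.1 < q.1) (ht : t ∈ Set.Icc p.1 q.1) :
    (t, lineHeight p q t) ∈ segment ℝ p q := by
  have hpos : 0 < q.1 - p.1 := sub_pos.2 h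
  rw [segment_eq_image_lineMap]
  refine ⟨(t - p.1) / (q.1 - p.1), ⟨div_nonneg (sub_nonneg.2 ht.1) hpos.le,
    (div_le_one hpos).2 (sub_le_sub_right ht.2 _)⟩, Prod.ext ?_ ?_⟩
  · simp [AffineMap.lineMap_apply, hpos.ne']
  · simp only [AffineMap.lineMap_apply, lineHeight, lineSlope, vsub_eq_sub, vadd_eq_add,
      Prod.snd_add, Prod.smul_snd, Prod.snd_sub, smul_eq_mul]
    ring

end LineHeight

/-- A straight-line plane drawing in which distinct vertices have distinct abscissae. That
non-isolated vertices avoid all other edges is a consequence, see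
`IsGenericDrawing.eq_or_eq_of_lineHeight_eq`. -/
structure IsGenericDrawing {V : Type*} (G : SimpleGraph V) (f : V → ℝ × ℝ) : Prop where
  fst_injective : Function.Injective fun v => (f v).1
  segment_inter_subset : ∀ u v x y : V, G.Adj u v → G.Adj x y → s(u, v) ≠ s(x, y) →
    segment ℝ (f u) (f v) ∩ segment ℝ (f x) (f y) ⊆
      ({f u, f v} : Set (ℝ × ℝ)) ∩ ({f x, f y} : Set (ℝ × ℝ))

/-- The edge `vb` leaves `v` to the right in the drawing `f`: this orients all edges of a generic
drawing. -/
structure RightAdj {V : Type*} (G : SimpleGraph V) (f : V → ℝ × ℝ) (v b : V) : Prop where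
  adj : G.Adj v b
  fst_lt : (f v).1 < (f b).1

/-- Among the edges leaving `v` to the right, `vb` is a lowest one. -/
structure IsLowestRight {V : Type*} (G : SimpleGraph V) (f : V → ℝ × ℝ) (v b : V) : Prop where
  rightAdj : RightAdj G f v b
  slope_le : ∀ c, RightAdj G f v c → lineSlope (f v) (f b) ≤ lineSlope (f v) (f c)

/-- The edges `va` and `vb` leave `v` to the right, with `vb` immediately above `va`. They are the
lower and the upper side of the corner. -/
structure IsRightCorner {V : Type*} (G : SimpleGraph V) (f : V → ℝ × ℝ) (v a b : V) : Prop where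
  lower : RightAdj G f v a
  upper : RightAdj G f v b
  slope_lt : lineSlope (f v) (f a) < lineSlope (f v) (f b)
  slope_le_of_lt : ∀ c, RightAdj G f v c → lineSlope (f v) (f c) < lineSlope (f v) (f b) →
    lineSlope (f v) (f c) ≤ lineSlope (f v) (f a)

/-- The vertex `w` lies in the closed wedge between the edges `va` and `vb`, no further right than
either edge reaches, and is not its apex `v`. -/
structure InWedge {V : Type*} (f : V → ℝ × ℝ) (v a b w : V) : Prop where
  apex_lt : (f v).1 < (f w).1
  le_lower_end : (f w).1 ≤ (f a).1
  le_upper_end : (f w).1 ≤ (f b).1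
  lower_le : lineHeight (f v) (f a) (f w).1 ≤ (f w).2
  le_upper : (f w).2 ≤ lineHeight (f v) (f b) (f w).1

/-- `w` is a leftmost non-isolated vertex in the wedge between `va` and `vb`. -/
structure IsFirstInWedge {V : Type*} (G : SimpleGraph V) (f : V → ℝ × ℝ) (v a b w : V) :
    Prop where
  inWedge : InWedge f v a b w
  mem_support : w ∈ G.support
  le_of_inWedge : ∀ z ∈ G.support, InWedge f v a b z → (f w).1 ≤ (f z).1

/-- The charging scheme: the edge `vb`, directed to the right, is charged to the vertex `w` in one
of three ways, as a lowest edge at its left end (`0`), or as the upper side of a corner whose wedge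
has `w` as first vertex, where `w` is the end of that side (`1`) or not (`2`). -/
def IsChargedTo {V : Type*} (G : SimpleGraph V) (f : V → ℝ × ℝ) (v b w : V) : Fin 3 → Prop
  | 0 => IsLowestRight G f v b ∧ w = v
  | 1 => ∃ a, IsRightCorner G f v a b ∧ IsFirstInWedge G f v a b w ∧ w = b
  | 2 => ∃ a, IsRightCorner G f v a b ∧ IsFirstInWedge G f v a b w ∧ w ≠ b

lemma exists_injective_fst_add_mul_snd {ι K : Type*} [Finite ι] [Field K] [Infinite K]
    {f : ι → K × K} (hf : Function.Injective f) :
    ∃ t : K, Function.Injective fun i => (f i).1 + t * (f i).2 := by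
  obtain ⟨t, ht⟩ := (Set.finite_range fun p : ι × ι =>
    ((f p.1).1 - (f p.2).1) / ((f p.2).2 - (f p.1).2)).exists_notMem
  refine ⟨t, fun i j hij => hf ?_⟩
  have hij : (f i).1 + t * (f i).2 = (f j).1 + t * (f j).2 := hij
  by_cases h : (f i).2 = (f j).2
  · exact Prod.ext (by simpa only [h, add_left_inj] using hij) h
  · refine absurd ⟨(i, j), ?_⟩ ht
    rw [div_eq_iff (sub_ne_zero.2 (Ne.symm h))]
    linear_combination hij

lemma StraightLinePlanar.exists_isGenericDrawing {V : Type*} [Finite V] {G : SimpleGraph V}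
    (hG : StraightLinePlanar G) : ∃ f, IsGenericDrawing G f := by
  obtain ⟨f, hf, hseg, -⟩ := hG
  obtain ⟨t, ht⟩ := exists_injective_fst_add_mul_snd hf
  let shear : ℝ × ℝ →ₗ[ℝ] ℝ × ℝ :=
    (LinearMap.fst ℝ ℝ ℝ + t • LinearMap.snd ℝ ℝ ℝ).prod (LinearMap.snd ℝ ℝ ℝ)
  have hshear : Function.Injective shear := by
    rintro ⟨a, b⟩ ⟨c, d⟩ h
    obtain ⟨h₁, h₂⟩ : a + t * b = c + t * d ∧ b = d := Prod.ext_iff.1 h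
    simpa [h₂] using h₁
  have himage (p q : ℝ × ℝ) : segment ℝ (shear p) (shear q) = shear '' segment ℝ p q :=
    (image_segment ℝ shear.toAffineMap p q).symm
  refine ⟨fun v => shear (f v), ht, fun u v x y huv hxy hne => ?_⟩
  simp only [himage]
  rw [← Set.image_inter hshear, ← Set.image_pair shear, ← Set.image_pair shear,
    ← Set.image_inter hshear]
  exact Set.image_mono (hseg u v x y huv hxy hne)

section Sweep

variable {V : Type*} {G : SimpleGraph V} {f : V → ℝ × ℝ} {v a b v' a' b' w x y : V}

lemma RightAdj.left_mem_support (h : RightAdj G f v b) : v ∈ G.support := ⟨b, h.adj⟩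

lemma RightAdj.right_mem_support (h : RightAdj G f v b) : b ∈ G.support := ⟨v, h.adj.symm⟩

lemma IsLowestRight.of_not_exists_isRightCorner [Finite V] (hb : RightAdj G f v b)
    (h : ¬ ∃ a, IsRightCorner G f v a b) : IsLowestRight G f v b := by
  refine ⟨hb, fun c hc => ?_⟩
  by_contra! hcb
  obtain ⟨a, ⟨ha, hab⟩, hmax⟩ := Set.exists_max_image
    {c | RightAdj G f v c ∧ lineSlope (f v) (f c) < lineSlope (f v) (f b)}
    (fun c => lineSlope (f v) (f c)) (Set.toFinite _) ⟨c, hc, hcb⟩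
  exact h ⟨a, ha, hb, hab, fun c hc hcb => hmax c ⟨hc, hcb⟩⟩

lemma IsRightCorner.exists_mem_support_inWedge (h : IsRightCorner G f v a b) :
    ∃ w ∈ G.support, InWedge f v a b w := by
  have height_lt {t : ℝ} (ht : (f v).1 < t) :
      lineHeight (f v) (f a) t < lineHeight (f v) (f b) t :=
    (lineHeight_lt_lineHeight_iff ht).2 h.slope_lt
  have ha := lineHeight_right h.lower.fst_lt.ne
  have hb := lineHeight_right h.upper.fst_lt.ne
  rcases le_total (f a).1 (f b).1 with hab | hab
  · exact ⟨a, h.lower.right_mem_support, h.lower.fst_lt, le_rfl, hab, ha.le,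
      ha.symm.trans_le (height_lt h.lower.fst_lt).le⟩
  · exact ⟨b, h.upper.right_mem_support, h.upper.fst_lt, hab, le_rfl,
      (height_lt h.upper.fst_lt).le.trans_eq hb, hb.ge⟩

lemma IsRightCorner.exists_isFirstInWedge [Finite V] (h : IsRightCorner G f v a b) :
    ∃ w, IsFirstInWedge G f v a b w := by
  obtain ⟨w, ⟨hw, hin⟩, hmin⟩ := Set.exists_min_image {w | w ∈ G.support ∧ InWedge f v a b w}
    (fun w => (f w).1) (Set.toFinite _) h.exists_mem_support_inWedge
  exact ⟨w, hin, hw, fun z hz hzw => hmin z ⟨hz, hzw⟩⟩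

lemma RightAdj.exists_isChargedTo [Finite V] (h : RightAdj G f v b) :
    ∃ w ∈ G.support, ∃ i, IsChargedTo G f v b w i := by
  by_cases hcorner : ∃ a, IsRightCorner G f v a b
  · obtain ⟨a, ha⟩ := hcorner
    obtain ⟨w, hw⟩ := ha.exists_isFirstInWedge
    rcases eq_or_ne w b with hwb | hwb
    · exact ⟨w, hw.mem_support, 1, a, ha, hw, hwb⟩
    · exact ⟨w, hw.mem_support, 2, a, ha, hw, hwb⟩
  · exact ⟨v, h.left_mem_support, 0, .of_not_exists_isRightCorner h hcorner, rfl⟩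

namespace IsGenericDrawing

lemma rightAdj_or_rightAdj (hf : IsGenericDrawing G f) (h : G.Adj v b) :
    RightAdj G f v b ∨ RightAdj G f b v :=
  (lt_or_gt_of_ne fun he => h.ne (hf.fst_injective he)).imp (⟨h, ·⟩) (⟨h.symm, ·⟩)

lemma lineHeight_ne (hf : IsGenericDrawing G f) (hvb : RightAdj G f v b) (hxy : RightAdj G f x y)
    (hne : (v, b) ≠ (x, y)) {t : ℝ} (ht : t ∈ Set.Ioo (f v).1 (f b).1)
    (ht' : t ∈ Set.Icc (f x).1 (f y).1) :
    lineHeight (f v) (f b) t ≠ lineHeight (f x) (f y) t := by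
  intro h
  have hne' : s(v, b) ≠ s(x, y) := by
    rw [Ne, Sym2.eq_iff]
    rintro (⟨rfl, rfl⟩ | ⟨rfl, rfl⟩)
    · exact hne rfl
    · exact lt_asymm hvb.fst_lt hxy.fst_lt
  rcases (hf.segment_inter_subset v b x y hvb.adj hxy.adj hne'
    ⟨mk_lineHeight_mem_segment hvb.fst_lt (Set.Ioo_subset_Icc_self ht),
      h ▸ mk_lineHeight_mem_segment hxy.fst_lt ht'⟩).1 with h | h
  · exact ht.1.ne' (congrArg Prod.fst h)
  · exact ht.2.ne (congrArg Prod.fst h)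

lemma eq_or_eq_of_lineHeight_eq (hf : IsGenericDrawing G f) (hvb : RightAdj G f v b)
    (hw : w ∈ G.support) (hvwb : (f w).1 ∈ Set.Icc (f v).1 (f b).1)
    (h : lineHeight (f v) (f b) (f w).1 = (f w).2) : w = v ∨ w = b := by
  obtain ⟨z, hwz⟩ := hw
  by_contra! hne
  have hedge : s(v, b) ≠ s(w, z) := fun h => by
    rcases Sym2.mem_iff.1 (h ▸ Sym2.mem_mk_left w z) with h | h
    exacts [hne.1 h, hne.2 h]
  have hmem : f w ∈ segment ℝ (f v) (f b) := by
    have := mk_lineHeight_mem_segment hvb.fst_lt hvwb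
    rwa [h] at this
  rcases (hf.segment_inter_subset v b w z hvb.adj hwz hedge ⟨hmem, left_mem_segment _ _ _⟩).1
    with h | h
  · exact hne.1 (hf.fst_injective (congrArg Prod.fst h))
  · exact hne.2 (hf.fst_injective (congrArg Prod.fst h))

lemma lineHeight_le_of_lt (hf : IsGenericDrawing G f) (hvb : RightAdj G f v b)
    (hxy : RightAdj G f x y) {r s : ℝ}
    (hr : r ∈ Set.Icc (f v).1 (f b).1) (hr' : r ∈ Set.Icc (f x).1 (f y).1)
    (hs : s ∈ Set.Icc (f v).1 (f b).1) (hs' : s ∈ Set.Icc (f x).1 (f y).1)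
    (h : lineHeight (f v) (f b) r < lineHeight (f x) (f y) r) :
    lineHeight (f v) (f b) s ≤ lineHeight (f x) (f y) s := by
  by_contra! hlt
  have hne : (v, b) ≠ (x, y) := by
    rintro ⟨⟩
    exact lt_irrefl _ h
  obtain ⟨z, hz, hz₀⟩ := intermediate_value_uIcc
    (f := fun t => lineHeight (f v) (f b) t - lineHeight (f x) (f y) t) (a := r) (b := s)
    ((continuous_lineHeight _ _).sub (continuous_lineHeight _ _)).continuousOn
    (Set.mem_uIcc.2 (Or.inl ⟨(sub_neg.2 h).le, (sub_pos.2 hlt).le⟩))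
  have heq : lineHeight (f v) (f b) z = lineHeight (f x) (f y) z := sub_eq_zero.1 hz₀
  have hzr : z ≠ r := by
    rintro rfl
    exact h.ne heq
  have hzs : z ≠ s := by
    rintro rfl
    exact hlt.ne' heq
  refine hf.lineHeight_ne hvb hxy hne ?_ (Set.uIcc_subset_Icc hr' hs' hz) heq
  rcases Set.mem_uIcc.1 hz with ⟨h₁, h₂⟩ | ⟨h₁, h₂⟩
  · exact ⟨hr.1.trans_lt (h₁.lt_of_ne' hzr), (h₂.lt_of_ne hzs).trans_le hs.2⟩
  · exact ⟨hs.1.trans_lt (h₁.lt_of_ne' hzs), (h₂.lt_of_ne hzr).trans_le hr.2⟩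

lemma eq_of_lineSlope_eq (hf : IsGenericDrawing G f) (ha : RightAdj G f v a)
    (hb : RightAdj G f v b) (h : lineSlope (f v) (f a) = lineSlope (f v) (f b)) : a = b := by
  by_contra hne
  obtain ⟨t, hvt, ht⟩ := exists_between (lt_min ha.fst_lt hb.fst_lt)
  obtain ⟨hta, htb⟩ := lt_min_iff.1 ht
  exact hf.lineHeight_ne ha hb (by simpa using hne) ⟨hvt, hta⟩ ⟨hvt.le, htb.le⟩
    (by rw [lineHeight, lineHeight, h])

lemma lower_lt_upper_of_inWedge (hf : IsGenericDrawing G f) (hc : IsRightCorner G f v a b)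
    (hc' : RightAdj G f v' b') (hw : w ∈ G.support) (hin : InWedge f v a b w)
    (hin' : InWedge f v' a' b' w) (hside : w = b' → w = b) :
    lineHeight (f v) (f a) (f w).1 < lineHeight (f v') (f b') (f w).1 := by
  refine (hin.lower_le.trans hin'.le_upper).lt_of_ne fun heq => ?_
  have hlower : lineHeight (f v) (f a) (f w).1 = (f w).2 :=
    hin.lower_le.antisymm (hin'.le_upper.trans_eq heq.symm)
  have hwa : w = a :=
    (hf.eq_or_eq_of_lineHeight_eq hc.lower hw ⟨hin.apex_lt.le, hin.le_lower_end⟩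
      hlower).resolve_left (by rintro rfl; exact hin.apex_lt.false)
  have hwb : w = b := hside <|
    (hf.eq_or_eq_of_lineHeight_eq hc' hw ⟨hin'.apex_lt.le, hin'.le_upper_end⟩
      (heq.symm.trans hlower)).resolve_left (by rintro rfl; exact hin'.apex_lt.false)
  exact hc.slope_lt.ne (by rw [← hwa, ← hwb])

/-- Otherwise the edge `xy` runs between the two sides of the corner until it starts inside the
wedge, or passes through the apex. -/
lemma upper_le_of_lower_lt (hf : IsGenericDrawing G f) (hc : IsRightCorner G f v a b)
    (hw : IsFirstInWedge G f v a b w) (hxy : RightAdj G f x y)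
    (hwx : (f x).1 < (f w).1) (hwy : (f w).1 ≤ (f y).1)
    (hlow : lineHeight (f v) (f a) (f w).1 < lineHeight (f x) (f y) (f w).1)
    {r : ℝ} (hvr : (f v).1 < r) (hxr : (f x).1 < r) (hrw : r ≤ (f w).1) :
    lineHeight (f v) (f b) r ≤ lineHeight (f x) (f y) r := by
  by_contra! hlt
  obtain ⟨hvw, hwa, hwb, -, -⟩ := hw.inWedge
  have hbetween {s : ℝ} (hvs : (f v).1 ≤ s) (hxs : (f x).1 ≤ s) (hsw : s ≤ (f w).1) :
      lineHeight (f v) (f a) s ≤ lineHeight (f x) (f y) s ∧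
        lineHeight (f x) (f y) s ≤ lineHeight (f v) (f b) s :=
    ⟨hf.lineHeight_le_of_lt hc.lower hxy ⟨hvw.le, hwa⟩ ⟨hwx.le, hwy⟩ ⟨hvs, hsw.trans hwa⟩
      ⟨hxs, hsw.trans hwy⟩ hlow,
    hf.lineHeight_le_of_lt hxy hc.upper ⟨hxr.le, hrw.trans hwy⟩ ⟨hvr.le, hrw.trans hwb⟩
      ⟨hxs, hsw.trans hwy⟩ ⟨hvs, hsw.trans hwb⟩ hlt⟩
  rcases lt_trichotomy (f v).1 (f x).1 with hvx | hvx | hxv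
  · obtain ⟨hax, hxb⟩ := hbetween hvx.le le_rfl hwx.le
    rw [lineHeight_left] at hax hxb
    exact hwx.not_ge (hw.le_of_inWedge x hxy.left_mem_support
      ⟨hvx, hwx.le.trans hwa, hwx.le.trans hwb, hax, hxb⟩)
  · obtain rfl : v = x := hf.fst_injective hvx
    exact ((lineHeight_lt_lineHeight_iff hvw).1 hlow).not_ge
      (hc.slope_le_of_lt y hxy ((lineHeight_lt_lineHeight_iff hvr).1 hlt))
  · obtain ⟨hav, hvb⟩ := hbetween le_rfl hxv.le hvw.le
    rw [lineHeight_left] at hav hvb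
    rcases hf.eq_or_eq_of_lineHeight_eq hxy hc.lower.left_mem_support
      ⟨hxv.le, hvw.le.trans hwy⟩ (hvb.antisymm hav) with rfl | rfl
    · exact hxv.false
    · exact hwy.not_gt hvw

lemma corner_unique (hf : IsGenericDrawing G f) (hc : IsRightCorner G f v a b)
    (hc' : IsRightCorner G f v' a' b') (hw : IsFirstInWedge G f v a b w)
    (hw' : IsFirstInWedge G f v' a' b' w) (hside : w = b ↔ w = b') : (v, b) = (v', b') := by
  by_contra hne
  have hin := hw.inWedge
  have hin' := hw'.inWedge
  obtain ⟨r, hr, hrw⟩ := exists_between (max_lt hin.apex_lt hin'.apex_lt)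
  obtain ⟨hvr, hvr'⟩ := max_lt_iff.1 hr
  have hle : lineHeight (f v) (f b) r ≤ lineHeight (f v') (f b') r :=
    hf.upper_le_of_lower_lt hc hw hc'.upper hin'.apex_lt hin'.le_upper_end
      (hf.lower_lt_upper_of_inWedge hc hc'.upper hw.mem_support hin hin' hside.2) hvr hvr' hrw.le
  have hge : lineHeight (f v') (f b') r ≤ lineHeight (f v) (f b) r :=
    hf.upper_le_of_lower_lt hc' hw' hc.upper hin.apex_lt hin.le_upper_end
      (hf.lower_lt_upper_of_inWedge hc' hc.upper hw.mem_support hin' hin hside.1) hvr' hvr hrw.le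
  exact hf.lineHeight_ne hc.upper hc'.upper hne ⟨hvr, hrw.trans_le hin.le_upper_end⟩
    ⟨hvr'.le, hrw.le.trans hin'.le_upper_end⟩ (hle.antisymm hge)

lemma eq_of_isChargedTo (hf : IsGenericDrawing G f) {i : Fin 3} (h : IsChargedTo G f v b w i)
    (h' : IsChargedTo G f v' b' w i) : (v, b) = (v', b') := by
  match i, h, h' with
  | 0, ⟨h, hwv⟩, ⟨h', hwv'⟩ =>
    obtain rfl : v = v' := hwv.symm.trans hwv'
    rw [hf.eq_of_lineSlope_eq h.rightAdj h'.rightAdj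
      ((h.slope_le _ h'.rightAdj).antisymm (h'.slope_le _ h.rightAdj))]
  | 1, ⟨_, hc, hw, hwb⟩, ⟨_, hc', hw', hwb'⟩ =>
    exact hf.corner_unique hc hc' hw hw' (iff_of_true hwb hwb')
  | 2, ⟨_, hc, hw, hwb⟩, ⟨_, hc', hw', hwb'⟩ =>
    exact hf.corner_unique hc hc' hw hw' (iff_of_false hwb hwb')

variable [Fintype V]

lemma card_edgeFinset_le_card_rightAdj (hf : IsGenericDrawing G f) :
    G.edgeFinset.card ≤ (Finset.univ.filter fun e : V × V => RightAdj G f e.1 e.2).card := by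
  refine (Finset.card_le_card fun e he => ?_).trans
    (Finset.card_image_le (f := fun e : V × V => s(e.1, e.2)))
  induction e with | _ v b
  rcases hf.rightAdj_or_rightAdj (SimpleGraph.mem_edgeFinset.1 he) with h | h
  · exact Finset.mem_image.2 ⟨(v, b), by simpa using h, rfl⟩
  · exact Finset.mem_image.2 ⟨(b, v), by simpa using h, Sym2.eq_swap⟩

lemma card_edgeFinset_lt (hf : IsGenericDrawing G f) (hne : G.support.Nonempty) :
    G.edgeFinset.card < 3 * G.support.toFinset.card := by
  obtain ⟨m, hm, hmax⟩ := Set.exists_max_image G.support (fun v => (f v).1) (Set.toFinite _) hne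
  let slots : Finset (V × Fin 3) := G.support.toFinset ×ˢ Finset.univ
  have hslots : slots.card = 3 * G.support.toFinset.card := by simp [slots, mul_comm]
  have hm_slot : (m, 0) ∈ slots := by simpa [slots] using hm
  rw [← hslots]
  refine (hf.card_edgeFinset_le_card_rightAdj.trans ?_).trans_lt
    (Finset.card_erase_lt_of_mem hm_slot)
  refine Finset.card_le_card_of_forall_subsingleton
    (fun e p => IsChargedTo G f e.1 e.2 p.1 p.2) (fun e he => ?_)
    fun p _ e he e' he' => hf.eq_of_isChargedTo he.2 he'.2
  have hright : RightAdj G f e.1 e.2 := (Finset.mem_filter.1 he).2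
  obtain ⟨w, hw, i, hi⟩ := hright.exists_isChargedTo
  refine ⟨(w, i), Finset.mem_erase.2 ⟨?_, by simpa [slots] using hw⟩, hi⟩
  rintro ⟨⟩
  exact hright.fst_lt.not_ge (hi.2 ▸ hmax e.2 hright.right_mem_support)

end IsGenericDrawing

end Sweep

lemma StraightLinePlanar.mono {V : Type*} {G H : SimpleGraph V} (hG : StraightLinePlanar G)
    (h : H ≤ G) : StraightLinePlanar H := by
  obtain ⟨f, hf, hseg, hvert⟩ := hG
  exact ⟨f, hf, fun u v x y huv hxy => hseg u v x y (h huv) (h hxy),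
    fun w u v huv => hvert w u v (h huv)⟩

theorem StraightLinePlanar.isDegenerate_five {V : Type*} [Fintype V] {G : SimpleGraph V}
    (hG : StraightLinePlanar G) : IsDegenerate G 5 := by
  intro H hH hne
  obtain ⟨f, hf⟩ := (hG.mono hH).exists_isGenericDrawing
  obtain ⟨v, hv, hlt⟩ := exists_mem_support_degree_lt (hf.card_edgeFinset_lt hne)
  exact ⟨v, hv, Nat.lt_succ_iff.1 hlt⟩

theorem stmt15_general {V α : Type*} [Fintype V] [Nonempty α] (G : SimpleGraph V)
    (hplanar : StraightLinePlanar G) (L : Sym2 V → Finset α)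
    (hL : ∀ u v, G.Adj u v → max (G.degree u) (G.degree v) + 4 ≤ (L s(u, v)).card) :
    ∃ f : Sym2 V → α, IsProperEdgeColoring G f ∧ ∀ e ∈ G.edgeSet, f e ∈ L e :=
  hplanar.isDegenerate_five.exists_isProperEdgeColoring L hL

/-- A planar graph with maximum degree `Δ` has a proper edge colouring with at
most `Δ + 4` colours, where moreover each edge `uv` gets a colour in
`{1, ..., max(deg u, deg v) + 4}`. -/
theorem stmt15 {V : Type*} [Fintype V] (G : SimpleGraph V)
    (hplanar : StraightLinePlanar G) :
    ∃ f : Sym2 V → ℕ,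
      (∀ u v w : V, G.Adj u v → G.Adj u w → v ≠ w → f s(u, v) ≠ f s(u, w)) ∧
      (∀ u v : V, G.Adj u v →
        1 ≤ f s(u, v) ∧ f s(u, v) ≤ max (G.degree u) (G.degree v) + 4 ∧
          f s(u, v) ≤ G.maxDegree + 4) := by
  obtain ⟨f, hf, hfL⟩ := stmt15_general G hplanar
    (fun e => Finset.Icc 1 ((e.map fun v => G.degree v).sup + 4)) (by simp)
  refine ⟨f, hf, fun u v huv => ?_⟩
  obtain ⟨hpos, hle⟩ := Finset.mem_Icc.1 (hfL s(u, v) huv)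
  have hmax : max (G.degree u) (G.degree v) ≤ G.maxDegree :=
    max_le (G.degree_le_maxDegree u) (G.degree_le_maxDegree v)
  exact ⟨hpos, hle, hle.trans (Nat.add_le_add_right hmax 4)⟩
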